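/- arXiv:1510.05013 — 3 statements merged into one kernel-verified Lean document; each statement's English description precedes it below -/
import Mathlib

section
/- Let A be a partial H-module algebra and I an H-stable ideal. The H-radical √_H(I) := {x ∈ A : every Hm-system containing x meets I} equals the intersection of all H-prime ideals of A containing I. In particular √_H(I) is an H-stable ideal. -/
open TensorProduct

noncomputable section

variable (k : Type*) [Field k]

/-- The "Sweedler sum" `h ↦ Σ f(h₁) * g(h₂)`. -/
def sweedler {H A : Type*} [Ring H] [HopfAlgebra k H]
    [Ring A] [Algebra k A] (f g : H →ₗ[k] A) : H →ₗ[k] A :=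
  (LinearMap.mul' k A) ∘ₗ (TensorProduct.map f g) ∘ₗ Coalgebra.comul

/-- A (left) partial `H`-module algebra structure on a unital algebra `A`:
`1_H · a = a`, `h · (ab) = Σ (h₁·a)(h₂·b)` and `h·(g·b) = Σ (h₁·1)((h₂ g)·b)`. -/
structure PartialModuleAlgebra (H A : Type*) [Ring H] [HopfAlgebra k H]
    [Ring A] [Algebra k A] where
  act : H →ₗ[k] A →ₗ[k] A
  one_act : ∀ a : A, act 1 a = a
  act_mul : ∀ (h : H) (a b : A),
    act h (a * b) = sweedler k (act.flip a) (act.flip b) h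
  act_act : ∀ (h g : H) (b : A),
    act h (act g b) =
      sweedler k (act.flip 1) ((act.flip b) ∘ₗ LinearMap.mulRight k g) h

variable {H A : Type*} [Ring H] [HopfAlgebra k H] [Ring A] [Algebra k A]

/-- A (two-sided) ideal of `A`, encoded as a `k`-submodule closed under multiplication
by elements of `A` on both sides. -/
def IsIdeal (I : Submodule k A) : Prop :=
  ∀ a ∈ I, ∀ b : A, a * b ∈ I ∧ b * a ∈ I

/-- An `H`-stable subspace: `H · I ⊆ I`. -/
def Hstable (ξ : PartialModuleAlgebra k H A) (I : Submodule k A) : Prop :=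
  ∀ (h : H), ∀ x ∈ I, ξ.act h x ∈ I

/-- `(I : H) = {x ∈ I | h · x ∈ I for all h ∈ H}`. -/
def colonH (ξ : PartialModuleAlgebra k H A) (I : Submodule k A) : Submodule k A :=
  I ⊓ ⨅ h : H, Submodule.comap (ξ.act h) I

/-- The product of two ideals of `A`. -/
def idealProd (I J : Submodule k A) : Submodule k A :=
  Submodule.span k {z | ∃ a ∈ I, ∃ b ∈ J, z = a * b}

/-- An `H`-prime ideal: a proper `H`-stable ideal `𝔭` such that for all `H`-stable ideals
`I, J`, `IJ ⊆ 𝔭` implies `I ⊆ 𝔭` or `J ⊆ 𝔭`. -/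
def IsHPrime (ξ : PartialModuleAlgebra k H A) (p : Submodule k A) : Prop :=
  IsIdeal k p ∧ Hstable k ξ p ∧ p ≠ ⊤ ∧
    ∀ I J : Submodule k A, IsIdeal k I → Hstable k ξ I → IsIdeal k J → Hstable k ξ J →
      idealProd k I J ≤ p → I ≤ p ∨ J ≤ p

/-- An `H`-semiprime ideal: a proper `H`-stable ideal `𝔰` such that `I² ⊆ 𝔰` implies
`I ⊆ 𝔰` for every `H`-stable ideal `I`. -/
def IsHSemiprime (ξ : PartialModuleAlgebra k H A) (s : Submodule k A) : Prop :=
  IsIdeal k s ∧ Hstable k ξ s ∧ s ≠ ⊤ ∧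
    ∀ I : Submodule k A, IsIdeal k I → Hstable k ξ I → idealProd k I I ≤ s → I ≤ s

/-- The subspace `A(H·x)A(H·y)`, spanned by the products `a (h·x) b (g·y)`. -/
def spanAxAy (ξ : PartialModuleAlgebra k H A) (x y : A) : Submodule k A :=
  Submodule.span k {w | ∃ (a : A) (h : H) (b : A) (g : H), w = a * ξ.act h x * b * ξ.act g y}

/-- An `Hm`-system: a nonempty `M ⊆ A` such that `A(H·x)A(H·y) ∩ M ≠ ∅` for `x, y ∈ M`. -/
def HmSystem (ξ : PartialModuleAlgebra k H A) (M : Set A) : Prop :=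
  M.Nonempty ∧ ∀ x ∈ M, ∀ y ∈ M, ∃ z ∈ M, z ∈ spanAxAy k ξ x y

/-- An `Hn`-system: a nonempty `N ⊆ A` such that `A(H·x)A(H·x) ∩ N ≠ ∅` for `x ∈ N`. -/
def HnSystem (ξ : PartialModuleAlgebra k H A) (N : Set A) : Prop :=
  N.Nonempty ∧ ∀ x ∈ N, ∃ z ∈ N, z ∈ spanAxAy k ξ x x

/-- The `H`-radical `√_H(I)` of an `H`-stable ideal `I`:
`{x | every Hm-system containing x meets I}`. -/
def Hradical (ξ : PartialModuleAlgebra k H A) (I : Submodule k A) : Set A :=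
  {x : A | ∀ M : Set A, HmSystem k ξ M → x ∈ M → (M ∩ (I : Set A)).Nonempty}

theorem sweedler_mem_aux (f g : H →ₗ[k] A) (J : Submodule k A)
    (hfg : ∀ h h' : H, f h * g h' ∈ J) (h : H) : sweedler k f g h ∈ J := by
  unfold sweedler
  simp only [LinearMap.comp_apply]
  generalize (Coalgebra.comul (R := k) h : H ⊗[k] H) = t
  induction t using TensorProduct.induction_on with
  | zero => simp
  | tmul a b => simpa using hfg a b
  | add a b ha hb => rw [map_add, map_add]; exact J.add_mem ha hb

/-- The `H`-stable ideal generated by `x`. -/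
def genIdeal_aux (ξ : PartialModuleAlgebra k H A) (x : A) : Submodule k A :=
  Submodule.span k {w | ∃ (a : A) (h : H) (b : A), w = a * ξ.act h x * b}

theorem genIdeal_mem_aux (ξ : PartialModuleAlgebra k H A) (x : A) :
    x ∈ genIdeal_aux k ξ x :=
  Submodule.subset_span ⟨1, 1, 1, by simp [ξ.one_act]⟩

theorem genIdeal_isIdeal_aux (ξ : PartialModuleAlgebra k H A) (x : A) :
    IsIdeal k (genIdeal_aux k ξ x) := by
  intro a ha b
  unfold genIdeal_aux at ha ⊢
  induction ha using Submodule.span_induction with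
  | mem w hw =>
    obtain ⟨c, h, d, rfl⟩ := hw
    exact ⟨Submodule.subset_span ⟨c, h, d * b, by simp only [mul_assoc]⟩,
      Submodule.subset_span ⟨b * c, h, d, by simp only [mul_assoc]⟩⟩
  | zero => simp
  | add u v _ _ hu hv =>
    rw [add_mul, mul_add]
    exact ⟨Submodule.add_mem _ hu.1 hv.1, Submodule.add_mem _ hu.2 hv.2⟩
  | smul r u _ hu =>
    rw [smul_mul_assoc, mul_smul_comm]
    exact ⟨Submodule.smul_mem _ _ hu.1, Submodule.smul_mem _ _ hu.2⟩

theorem genIdeal_stable_aux (ξ : PartialModuleAlgebra k H A) (x : A) :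
    Hstable k ξ (genIdeal_aux k ξ x) := by
  have hid := genIdeal_isIdeal_aux k ξ x
  intro g u hu
  have hgen : ∀ h : H, ξ.act h x ∈ genIdeal_aux k ξ x := fun h =>
    Submodule.subset_span ⟨1, h, 1, by simp⟩
  have hact : ∀ g h : H, ξ.act g (ξ.act h x) ∈ genIdeal_aux k ξ x := by
    intro g h
    rw [ξ.act_act]
    apply sweedler_mem_aux
    intro p q
    exact (hid _ (hgen _) _).2
  have hmem : u ∈ Submodule.comap (ξ.act g) (genIdeal_aux k ξ x) := by
    refine Submodule.span_le.2 ?_ hu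
    rintro w ⟨a, h, b, rfl⟩
    change ξ.act g _ ∈ genIdeal_aux k ξ x
    rw [ξ.act_mul]
    apply sweedler_mem_aux
    intro p q
    refine (hid _ ?_ _).1
    change ξ.act p _ ∈ genIdeal_aux k ξ x
    rw [ξ.act_mul]
    apply sweedler_mem_aux
    intro p' q'
    exact (hid _ (hact _ _) _).2
  exact hmem

theorem compl_HmSystem_aux (ξ : PartialModuleAlgebra k H A) (p : Submodule k A)
    (hp : IsHPrime k ξ p) (x y : A) (hx : x ∉ p) (hy : y ∉ p) :
    ∃ z, z ∉ p ∧ z ∈ spanAxAy k ξ x y := by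
  by_contra! hcon
  obtain ⟨hid, -, -, hpr⟩ := hp
  have key : ∀ z ∈ spanAxAy k ξ x y, z ∈ p := fun z hz => by
    by_contra h
    exact hcon z h hz
  have hle : idealProd k (genIdeal_aux k ξ x) (genIdeal_aux k ξ y) ≤ p := by
    refine Submodule.span_le.2 ?_
    rintro _ ⟨u, hu, v, hv, rfl⟩
    change u * v ∈ p
    have h1 : u ∈ Submodule.comap (LinearMap.mulRight k v) p := by
      refine Submodule.span_le.2 ?_ hu
      rintro _ ⟨a, h, b, rfl⟩
      change a * ξ.act h x * b * v ∈ p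
      have h2 : v ∈ Submodule.comap (LinearMap.mulLeft k (a * ξ.act h x * b)) p := by
        refine Submodule.span_le.2 ?_ hv
        rintro _ ⟨c, g, d, rfl⟩
        change a * ξ.act h x * b * (c * ξ.act g y * d) ∈ p
        have h3 := (hid _ (key (a * ξ.act h x * (b * c) * ξ.act g y)
          (Submodule.subset_span ⟨a, h, b * c, g, rfl⟩)) d).1
        simpa only [mul_assoc] using h3
      exact h2
    exact h1
  rcases hpr (genIdeal_aux k ξ x) (genIdeal_aux k ξ y) (genIdeal_isIdeal_aux k ξ x)
    (genIdeal_stable_aux k ξ x) (genIdeal_isIdeal_aux k ξ y) (genIdeal_stable_aux k ξ y) hle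
    with h | h
  · exact hx (h (genIdeal_mem_aux k ξ x))
  · exact hy (h (genIdeal_mem_aux k ξ y))

theorem sup_isIdeal_aux (p J : Submodule k A) (hp : IsIdeal k p) (hJ : IsIdeal k J) :
    IsIdeal k (p ⊔ J) := by
  intro a ha b
  obtain ⟨u, hu, v, hv, rfl⟩ := Submodule.mem_sup.1 ha
  rw [add_mul, mul_add]
  exact ⟨Submodule.add_mem_sup (hp u hu b).1 (hJ v hv b).1,
    Submodule.add_mem_sup (hp u hu b).2 (hJ v hv b).2⟩

theorem sup_stable_aux (ξ : PartialModuleAlgebra k H A) (p J : Submodule k A)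
    (hp : Hstable k ξ p) (hJ : Hstable k ξ J) : Hstable k ξ (p ⊔ J) := by
  intro h a ha
  obtain ⟨u, hu, v, hv, rfl⟩ := Submodule.mem_sup.1 ha
  rw [map_add]
  exact Submodule.add_mem_sup (hp h u hu) (hJ h v hv)

theorem exists_HPrime_aux (ξ : PartialModuleAlgebra k H A) (I : Submodule k A)
    (hI : IsIdeal k I) (hs : Hstable k ξ I) (M : Set A) (hM : HmSystem k ξ M)
    (hMI : ∀ x ∈ M, x ∉ I) :
    ∃ p : Submodule k A, IsHPrime k ξ p ∧ I ≤ p ∧ ∀ x ∈ M, x ∉ p := by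
  obtain ⟨p, hIp, hmax⟩ := zorn_le_nonempty₀
    {p : Submodule k A | IsIdeal k p ∧ Hstable k ξ p ∧ ∀ x ∈ M, x ∉ p} (by
      intro c hc hchain y hy
      have hmem : ∀ z, z ∈ sSup c ↔ ∃ q ∈ c, z ∈ q := fun z =>
        Submodule.mem_sSup_of_directed ⟨y, hy⟩ hchain.directedOn
      refine ⟨sSup c, ⟨?_, ?_, ?_⟩, fun z hz => le_sSup hz⟩
      · intro a ha b
        obtain ⟨q, hq, haq⟩ := (hmem a).1 ha
        exact ⟨(hmem _).2 ⟨q, hq, ((hc hq).1 a haq b).1⟩,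
          (hmem _).2 ⟨q, hq, ((hc hq).1 a haq b).2⟩⟩
      · intro h a ha
        obtain ⟨q, hq, haq⟩ := (hmem a).1 ha
        exact (hmem _).2 ⟨q, hq, (hc hq).2.1 h a haq⟩
      · intro x hx hxs
        obtain ⟨q, hq, haq⟩ := (hmem x).1 hxs
        exact (hc hq).2.2 x hx haq) I ⟨hI, hs, hMI⟩
  obtain ⟨hid, hst, hdis⟩ := hmax.prop
  refine ⟨p, ⟨hid, hst, ?_, ?_⟩, hIp, hdis⟩
  · rintro rfl
    obtain ⟨x, hx⟩ := hM.1
    exact hdis x hx trivial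
  · intro J K hJ hJs hK hKs hJK
    by_contra! hcon
    have meet : ∀ L : Submodule k A, IsIdeal k L → Hstable k ξ L → ¬ L ≤ p →
        ∃ m ∈ M, m ∈ p ⊔ L := by
      intro L hL hLs hLp
      by_contra! hno
      exact hLp (le_sup_right.trans (hmax.2
        ⟨sup_isIdeal_aux k p L hid hL, sup_stable_aux k ξ p L hst hLs, hno⟩ le_sup_left))
    obtain ⟨m, hm, hmJ⟩ := meet J hJ hJs hcon.1
    obtain ⟨n, hn, hnK⟩ := meet K hK hKs hcon.2
    obtain ⟨z, hz, hzs⟩ := hM.2 m hm n hn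
    refine hdis z hz (Submodule.span_le.2 ?_ hzs)
    rintro _ ⟨a, h, b, g, rfl⟩
    have hJi := sup_isIdeal_aux k p J hid hJ
    have h1 : a * ξ.act h m * b ∈ p ⊔ J :=
      (hJi _ (hJi _ (sup_stable_aux k ξ p J hst hJs h m hmJ) a).2 b).1
    have h2 : ξ.act g n ∈ p ⊔ K := sup_stable_aux k ξ p K hst hKs g n hnK
    obtain ⟨u, hu, v, hv, e1⟩ := Submodule.mem_sup.1 h1
    obtain ⟨u', hu', v', hv', e2⟩ := Submodule.mem_sup.1 h2
    change a * ξ.act h m * b * ξ.act g n ∈ p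
    rw [← e1, ← e2, add_mul, mul_add v]
    exact p.add_mem (hid u hu _).1 (p.add_mem (hid u' hu' _).2
      (hJK (Submodule.subset_span ⟨v, hv, v', hv', rfl⟩)))

/-- The `H`-radical of an `H`-stable ideal `I` is the intersection of all `H`-prime ideals
containing `I`.  In particular `√_H(I)` is an `H`-stable ideal. -/
theorem Hradical_eq_sInter_HPrime (ξ : PartialModuleAlgebra k H A) (I : Submodule k A)
    (hI : IsIdeal k I) (hs : Hstable k ξ I) :
    Hradical k ξ I =
      {x : A | ∀ p : Submodule k A, IsHPrime k ξ p → I ≤ p → x ∈ p} ∧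
    ∃ J : Submodule k A, (J : Set A) = Hradical k ξ I ∧ IsIdeal k J ∧ Hstable k ξ J := by
  have main : Hradical k ξ I =
      {x : A | ∀ p : Submodule k A, IsHPrime k ξ p → I ≤ p → x ∈ p} := by
    ext x
    constructor
    · intro hx p hp hIp
      by_contra hxp
      obtain ⟨z, hz, hzI⟩ := hx {z | z ∉ p} ⟨⟨x, hxp⟩, fun u hu v hv =>
        compl_HmSystem_aux k ξ p hp u v hu hv⟩ hxp
      exact hz (hIp hzI)
    · intro hx M hM hxM
      by_contra hne
      obtain ⟨p, hp, hIp, hdis⟩ := exists_HPrime_aux k ξ I hI hs M hM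
        (fun y hy hyI => hne ⟨y, hy, hyI⟩)
      exact hdis x hxM (hx p hp hIp)
  refine ⟨main, sInf {p | IsHPrime k ξ p ∧ I ≤ p}, ?_, ?_, ?_⟩
  · rw [main]
    ext x
    simp [Submodule.mem_sInf]
  · intro a ha b
    rw [Submodule.mem_sInf] at ha
    simp only [Submodule.mem_sInf]
    exact ⟨fun p hp => (hp.1.1 a (ha p hp) b).1, fun p hp => (hp.1.1 a (ha p hp) b).2⟩
  · intro h a ha
    rw [Submodule.mem_sInf] at ha ⊢
    exact fun p hp => hp.1.2.1 h a (ha p hp)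
end
end

section
/- Let A be a partial H-module algebra and N ⊆ A an Hn-system. For every a ∈ N there exists an Hm-system M with a ∈ M ⊆ N. -/
open TensorProduct

noncomputable section

variable (k : Type*) [Field k]

variable {H A : Type*} [Ring H] [HopfAlgebra k H] [Ring A] [Algebra k A]

def lspan (ξ : PartialModuleAlgebra k H A) (x : A) : Submodule k A :=
  Submodule.span k {w | ∃ (a : A) (h : H), w = a * ξ.act h x}

theorem lspan_mul_mem (ξ : PartialModuleAlgebra k H A) (x b u : A) (hu : u ∈ lspan k ξ x) :
    b * u ∈ lspan k ξ x := by
  unfold lspan at hu ⊢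
  induction hu using Submodule.span_induction with
  | mem u hu =>
    obtain ⟨a, h, rfl⟩ := hu
    exact Submodule.subset_span ⟨b * a, h, by rw [mul_assoc]⟩
  | zero => simp
  | add u v _ _ hu hv => rw [mul_add]; exact add_mem hu hv
  | smul c u _ hu => rw [mul_smul_comm]; exact Submodule.smul_mem _ c hu

theorem sweedler_mem (L : Submodule k A) (hL : ∀ b, ∀ u ∈ L, b * u ∈ L)
    (f g : H →ₗ[k] A) (hg : ∀ h, g h ∈ L) (h : H) : sweedler k f g h ∈ L := by
  unfold sweedler
  simp only [LinearMap.comp_apply]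
  induction (Coalgebra.comul (R := k) h) using TensorProduct.induction_on with
  | zero => simp
  | tmul p q => simpa using hL _ _ (hg q)
  | add p q hp hq => rw [map_add, map_add]; exact add_mem hp hq

theorem lspan_act_mem (ξ : PartialModuleAlgebra k H A) (x u : A) (hu : u ∈ lspan k ξ x)
    (h : H) : ξ.act h u ∈ lspan k ξ x := by
  have hL : ∀ b, ∀ u ∈ lspan k ξ x, b * u ∈ lspan k ξ x := fun b u => lspan_mul_mem k ξ x b u
  have hx : ∀ g : H, ξ.act g x ∈ lspan k ξ x := fun g =>
    Submodule.subset_span ⟨1, g, by rw [one_mul]⟩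
  have key : lspan k ξ x ≤ (lspan k ξ x).comap (ξ.act h) := by
    conv_lhs => unfold lspan
    rw [Submodule.span_le]
    rintro _ ⟨a, g, rfl⟩
    show ξ.act h (a * ξ.act g x) ∈ lspan k ξ x
    rw [ξ.act_mul]
    refine sweedler_mem k _ hL _ _ (fun h' => ?_) h
    show ξ.act h' (ξ.act g x) ∈ lspan k ξ x
    rw [ξ.act_act]
    exact sweedler_mem k _ hL _ _ (fun h'' => hx _) h'
  exact key hu

theorem lspan_le (ξ : PartialModuleAlgebra k H A) (x y : A) (hy : y ∈ lspan k ξ x) :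
    lspan k ξ y ≤ lspan k ξ x := by
  conv_lhs => unfold lspan
  rw [Submodule.span_le]
  rintro _ ⟨a, g, rfl⟩
  exact lspan_mul_mem k ξ x _ _ (lspan_act_mem k ξ x y hy g)

theorem spanAxAy_eq (ξ : PartialModuleAlgebra k H A) (x y : A) :
    spanAxAy k ξ x y = lspan k ξ x * lspan k ξ y := by
  unfold spanAxAy lspan
  rw [Submodule.span_mul_span]
  congr 1
  ext w
  constructor
  · rintro ⟨a, h, b, g, rfl⟩
    exact Set.mem_mul.2 ⟨_, ⟨a, h, rfl⟩, _, ⟨b, g, rfl⟩, by simp only [mul_assoc]⟩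
  · intro hw
    obtain ⟨_, ⟨a, h, rfl⟩, _, ⟨b, g, rfl⟩, rfl⟩ := Set.mem_mul.1 hw
    exact ⟨a, h, b, g, by simp only [mul_assoc]⟩

theorem spanAxAy_le (ξ : PartialModuleAlgebra k H A) (x y : A) :
    spanAxAy k ξ x y ≤ lspan k ξ y := by
  unfold spanAxAy
  rw [Submodule.span_le]
  rintro _ ⟨a, h, b, g, rfl⟩
  exact Submodule.subset_span ⟨_, g, rfl⟩

/-- Every element of an `Hn`-system `N` lies in an `Hm`-system contained in `N`. -/
theorem HnSystem_union_of_HmSystems (ξ : PartialModuleAlgebra k H A) (N : Set A)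
    (hN : HnSystem k ξ N) (a : A) (ha : a ∈ N) :
    ∃ M : Set A, HmSystem k ξ M ∧ a ∈ M ∧ M ⊆ N := by
  obtain ⟨_, hN⟩ := hN
  choose! f hfN hf using hN
  let s : ℕ → A := fun n => f^[n] a
  have hs : ∀ n, s (n + 1) = f (s n) := fun n => Function.iterate_succ_apply' f n a
  have hsN : ∀ n, s n ∈ N := by
    intro n
    induction n with
    | zero => exact ha
    | succ n ih => rw [hs]; exact hfN _ ih
  have hanti : Antitone (fun n => lspan k ξ (s n)) := by
    refine antitone_nat_of_succ_le fun n => ?_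
    apply lspan_le
    rw [hs]
    exact spanAxAy_le k ξ _ _ (hf _ (hsN n))
  refine ⟨Set.range s, ⟨⟨a, 0, rfl⟩, ?_⟩, ⟨0, rfl⟩, ?_⟩
  · rintro _ ⟨i, rfl⟩ _ ⟨j, rfl⟩
    refine ⟨s (max i j + 1), ⟨_, rfl⟩, ?_⟩
    have h := hf _ (hsN (max i j))
    rw [← hs, spanAxAy_eq] at h
    rw [spanAxAy_eq]
    exact mul_le_mul' (hanti (le_max_left i j)) (hanti (le_max_right i j)) h
  · rintro _ ⟨n, rfl⟩
    exact hsN n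
end
end

section
/- Let H be a finite-dimensional Hopf algebra and A a partial H-module algebra. Every H-prime ideal 𝔭 of A is of the form (𝒫:H) for some prime ideal 𝒫 of A. -/
open TensorProduct

noncomputable section

variable (k : Type*) [Field k]

variable {H A : Type*} [Ring H] [HopfAlgebra k H] [Ring A] [Algebra k A]

/-- A prime ideal of `A` (in the two-sided, ideal-theoretic sense). -/
def IsPrimeIdeal (P : Submodule k A) : Prop :=
  IsIdeal k P ∧ P ≠ ⊤ ∧
    ∀ I J : Submodule k A, IsIdeal k I → IsIdeal k J → idealProd k I J ≤ P → I ≤ P ∨ J ≤ P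

theorem aux_sweedler_mem (K : Submodule k A) (f g : H →ₗ[k] A)
    (hfg : ∀ x y, f x * g y ∈ K) (h : H) : sweedler k f g h ∈ K := by
  simp only [sweedler, LinearMap.comp_apply]
  generalize (Coalgebra.comul (R := k) h) = t
  induction t using TensorProduct.induction_on with
  | zero => simp
  | tmul x y => simpa using hfg x y
  | add a b ha hb => simpa using K.add_mem ha hb

theorem aux_mem_colonH (ξ : PartialModuleAlgebra k H A) (I : Submodule k A) (x : A) :
    x ∈ colonH k ξ I ↔ ∀ h, ξ.act h x ∈ I := by
  simp only [colonH, Submodule.mem_inf, Submodule.mem_iInf, Submodule.mem_comap]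
  refine ⟨fun h => h.2, fun h => ⟨?_, h⟩⟩
  simpa [ξ.one_act] using h 1

theorem aux_colonH_ideal (ξ : PartialModuleAlgebra k H A) (I : Submodule k A)
    (hI : IsIdeal k I) : IsIdeal k (colonH k ξ I) := by
  intro a ha b
  rw [aux_mem_colonH] at ha
  constructor
  · rw [aux_mem_colonH]
    intro h
    rw [ξ.act_mul]
    exact aux_sweedler_mem k I _ _ (fun x y => (hI _ (ha x) _).1) h
  · rw [aux_mem_colonH]
    intro h
    rw [ξ.act_mul]
    exact aux_sweedler_mem k I _ _ (fun x y => (hI _ (ha y) _).2) h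

theorem aux_colonH_stable (ξ : PartialModuleAlgebra k H A) (I : Submodule k A)
    (hI : IsIdeal k I) : Hstable k ξ (colonH k ξ I) := by
  intro g a ha
  rw [aux_mem_colonH] at ha ⊢
  intro h
  rw [ξ.act_act]
  exact aux_sweedler_mem k I _ _ (fun x y => (hI _ (ha (y * g)) _).2) h

theorem aux_sup_ideal (I J : Submodule k A) (hI : IsIdeal k I) (hJ : IsIdeal k J) :
    IsIdeal k (I ⊔ J) := by
  intro a ha b
  obtain ⟨x, hx, y, hy, rfl⟩ := Submodule.mem_sup.1 ha
  rw [add_mul, mul_add]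
  exact ⟨Submodule.add_mem_sup (hI x hx b).1 (hJ y hy b).1,
    Submodule.add_mem_sup (hI x hx b).2 (hJ y hy b).2⟩

/-- If `H` is finite dimensional, every `H`-prime ideal of `A` is of the form `(𝒫 : H)`
for some prime ideal `𝒫` of `A`. -/
theorem isHPrime_eq_colonH_prime [FiniteDimensional k H]
    (ξ : PartialModuleAlgebra k H A) (p : Submodule k A) (hp : IsHPrime k ξ p) :
    ∃ P : Submodule k A, IsPrimeIdeal k P ∧ p = colonH k ξ P := by
  obtain ⟨hpI, hpH, hpt, hpp⟩ := hp
  let S : Set (Submodule k A) := {I | IsIdeal k I ∧ colonH k ξ I ≤ p}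
  have hpS : p ∈ S := ⟨hpI, inf_le_left⟩
  obtain ⟨P, hpP, hP⟩ := zorn_le_nonempty₀ S (by
    intro c hcS hc y hy
    have hd : DirectedOn (· ≤ ·) c := hc.directedOn
    refine ⟨sSup c, ⟨?_, ?_⟩, fun z hz => le_sSup hz⟩
    · intro a ha b
      obtain ⟨I, hI, haI⟩ := (Submodule.mem_sSup_of_directed ⟨y, hy⟩ hd).1 ha
      exact ⟨le_sSup hI ((hcS hI).1 a haI b).1, le_sSup hI ((hcS hI).1 a haI b).2⟩
    · intro x hx
      rw [aux_mem_colonH] at hx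
      have hfg : (LinearMap.range (ξ.act.flip x)).FG := Submodule.FG.of_finite
      have hle : LinearMap.range (ξ.act.flip x) ≤ sSup c := by
        rintro _ ⟨h, rfl⟩
        exact hx h
      obtain ⟨I, hI, hxI⟩ :=
        (CompleteLattice.isCompactElement_iff_le_of_directed_sSup_le _ _).1
          ((Submodule.fg_iff_compact _).1 hfg) c ⟨y, hy⟩ hd hle
      exact (hcS hI).2 ((aux_mem_colonH k ξ I x).2 fun h => hxI ⟨h, rfl⟩)) p hpS
  obtain ⟨⟨hPI, hPp⟩, hmax⟩ := hP
  refine ⟨P, ⟨hPI, ?_, ?_⟩, le_antisymm ?_ hPp⟩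
  · rintro rfl
    exact hpt (top_le_iff.1 fun x _ => hPp ((aux_mem_colonH k ξ ⊤ x).2 fun _ => trivial))
  · intro I J hI hJ hIJ
    by_contra! hcon
    have key : ∀ I : Submodule k A, IsIdeal k I → ¬ I ≤ P → ¬ colonH k ξ (I ⊔ P) ≤ p := by
      intro I hI hn hle
      exact hn (le_sup_left.trans (hmax ⟨aux_sup_ideal k I P hI hPI, hle⟩ le_sup_right))
    have hI' := aux_sup_ideal k I P hI hPI
    have hJ' := aux_sup_ideal k J P hJ hPI
    rcases hpp _ _ (aux_colonH_ideal k ξ _ hI') (aux_colonH_stable k ξ _ hI')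
      (aux_colonH_ideal k ξ _ hJ') (aux_colonH_stable k ξ _ hJ') (by
        refine Submodule.span_le.2 ?_
        rintro _ ⟨a, ha, b, hb, rfl⟩
        rw [aux_mem_colonH] at ha hb
        refine hPp ((aux_mem_colonH k ξ P _).2 fun h => ?_)
        rw [ξ.act_mul]
        refine aux_sweedler_mem k P _ _ (fun x y => ?_) h
        obtain ⟨u, hu, v, hv, huv⟩ := Submodule.mem_sup.1 (ha x)
        obtain ⟨w, hw, z, hz, hwz⟩ := Submodule.mem_sup.1 (hb y)
        rw [LinearMap.flip_apply, LinearMap.flip_apply, ← huv, ← hwz, add_mul, mul_add]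
        exact P.add_mem (P.add_mem (hIJ (Submodule.subset_span ⟨u, hu, w, hw, rfl⟩))
          (hPI z hz u).2) (hPI v hv _).1) with h | h
    · exact key I hI hcon.1 h
    · exact key J hJ hcon.2 h
  · intro x hx
    exact (aux_mem_colonH k ξ P x).2 fun h => hpP (hpH h x hx)
end
end
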